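/- Proposition 2.3 (prop1): There exists a unique K-algebra anti-homomorphism Ξ : 𝓗_m → End_K(V̄^⊗m) such that: (i) Ξ(T_i) = Ψ(H_i) for i = 0, 1, …, m−1; (ii) for every 0 ≤ l ≤ m and σ ∈ 𝔖_l, the restriction of Ξ(x_σ^(l)) to V^⊗l ⊗ η_{r+3/2}^⊗(m−l) equals Ψ_l^V(H_σ) ⊗ id^⊗(m−l); and (iii) Ξ(x_σ^(l))(M_f) = 0 for every basis vector M_f ∉ V^⊗l ⊗ η_{r+3/2}^⊗(m−l). -/

import Mathlib

/-!
`Ξ` is constructed as an algebra homomorphism from `𝓗_m` to the opposite algebra of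
`End(V̄^⊗m)`, by sending `T_i` to `Ψ(H_i)` and `x_σ^{(l)}` to `Ψ(H_σ) ∘ π_l`, where `π_l`
(`projL`) is the projection onto `V^{⊗l} ⊗ η_{r+3/2}^{⊗(m-l)}` that kills every other basis vector.
The defining relations of `𝓗_m` then hold for the following reasons.

* The operators `Ψ(H_i)` satisfy the type `B` Hecke relations. `Ψ(H_i)` only involves one or two
  adjacent labels, so each braid relation is an identity between functions of two or three labels,
  checked separately for every possible ordering of the labels and their negatives
  (`sw2_braid`, `rv1_sw2_braid`).
* By Matsumoto's theorem, the product along a reduced word of `σ ∈ 𝔖_l` depends only on `σ`.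
  It is proved here by induction on the length, in the form that any right descent of `σ` may be
  the last letter (`wordProd_of_isDescent`). It yields `H_σ H_s = H_{σs}` and `H_s H_σ = H_{sσ}` when
  the length goes up (`wordProd_mul_up`, `wordProd_up_mul`); the other case follows from the
  quadratic relation.
* `π_l` commutes with `Ψ(H_i)` for `0 < i ≠ l` (`Rsw_comm_projL`), because interchanging the labels in
  positions `i` and `i+1` then preserves the form of a basis vector of the image. For `i > l` the two
  labels are equal, so `Ψ(H_i)` acts by `q⁻¹` on the image (`Rsw_mul_projL`). The `π_l` are
  orthogonal idempotents (`projL_mul_self`, `projL_mul_projL`), since a basis vector determines `l`.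

Uniqueness: the conditions prescribe the value of `Ξ` at each `T_i`, and of `Ξ(x_σ^{(l)})` at each
basis vector `M_f` (`eq_of_good_of_not_good`).
-/

noncomputable section

open scoped BigOperators

set_option maxHeartbeats 1000000
set_option synthInstance.maxHeartbeats 400000

/-- The field `ℚ(q)`. -/
abbrev Kq : Type := RatFunc ℚ

/-- The element `q`, transcendental over `ℚ`. -/
def qv : Kq := RatFunc.X

/-- Index set `𝕀(2r+4)`: the `j`-th element represents the half-integer `j - r - 3/2`. -/
abbrev Idx (r : ℕ) := Fin (2*r+4)

/-- The space `V̄`, with basis `η_j` indexed by `𝕀(2r+4)` (coordinate form). -/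
abbrev Vb (r : ℕ) := Idx r → Kq

/-- The tensor power `V̄^⊗m` (coordinates with respect to the basis `M_f`). -/
abbrev TP (r m : ℕ) := (Fin m → Idx r) → Kq

/-- Basis vector `M_f = η_{f 0} ⊗ ⋯ ⊗ η_{f (m-1)}`. -/
def Mf {r m : ℕ} (f : Fin m → Idx r) : TP r m := Pi.single f 1

/-- For a quantum-group index `a : Fin (2r+3)` (representing `i = a - r - 1 ∈ [-r-1, r+1]`),
the index of `η_{i - 1/2}`. -/
def loI {r : ℕ} (a : Fin (2*r+3)) : Idx r := ⟨a.1, by have := a.2; omega⟩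

/-- The index of `η_{i + 1/2}`. -/
def hiI {r : ℕ} (a : Fin (2*r+3)) : Idx r := ⟨a.1+1, by have := a.2; omega⟩

/-- The index of `η_{-r-3/2}`. -/
def botI (r : ℕ) : Idx r := ⟨0, by omega⟩

/-- The index of `η_{r+3/2}`. -/
def topI (r : ℕ) : Idx r := ⟨2*r+3, by omega⟩

/-- A linear endomorphism of `V̄` of the shape `v ↦ (j ↦ c j * v (t j))`. -/
def diagMove (r : ℕ) (c : Idx r → Kq) (t : Idx r → Idx r) : Module.End Kq (Vb r) where
  toFun v := fun j => c j * v (t j)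
  map_add' u v := by funext j; simp [Pi.add_apply, mul_add]
  map_smul' s v := by
    funext j
    simp only [Pi.smul_apply, smul_eq_mul, RingHom.id_apply]
    ring

/-- The operator `e_i` on `V̄`: `e_i η_{i+1/2} = η_{i-1/2}`, zero on other basis vectors. -/
def opE (r : ℕ) (a : Fin (2*r+3)) : Module.End Kq (Vb r) :=
  diagMove r (fun j => if j = loI a then 1 else 0) (fun j => if j = loI a then hiI a else j)

/-- The operator `f_i` on `V̄`: `f_i η_{i-1/2} = η_{i+1/2}`, zero on other basis vectors. -/
def opF (r : ℕ) (a : Fin (2*r+3)) : Module.End Kq (Vb r) :=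
  diagMove r (fun j => if j = hiI a then 1 else 0) (fun j => if j = hiI a then loI a else j)

/-- The operator `κ_i` on `V̄`. -/
def opK (r : ℕ) (a : Fin (2*r+3)) : Module.End Kq (Vb r) :=
  diagMove r (fun j => if j = loI a then qv else if j = hiI a then qv⁻¹ else 1) id

/-- The operator `κ_i⁻¹` on `V̄`. -/
def opKinv (r : ℕ) (a : Fin (2*r+3)) : Module.End Kq (Vb r) :=
  diagMove r (fun j => if j = loI a then qv⁻¹ else if j = hiI a then qv else 1) id

/-- A linear endomorphism of `V̄^⊗m` given by a "matrix" `c`. -/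
def matOp (r m : ℕ) (c : (Fin m → Idx r) → (Fin m → Idx r) → Kq) : Module.End Kq (TP r m) where
  toFun v := fun g => ∑ f : Fin m → Idx r, c g f * v f
  map_add' u v := by
    funext g
    simp [Pi.add_apply, mul_add, Finset.sum_add_distrib]
  map_smul' s v := by
    funext g
    simp only [Pi.smul_apply, smul_eq_mul, RingHom.id_apply, Finset.mul_sum]
    exact Finset.sum_congr rfl (fun f _ => by ring)

/-- The tensor product `A 0 ⊗ A 1 ⊗ ⋯ ⊗ A (m-1)` of endomorphisms of `V̄`,
as an endomorphism of `V̄^⊗m`. -/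
def tensorOp (r m : ℕ) (A : Fin m → Module.End Kq (Vb r)) : Module.End Kq (TP r m) :=
  matOp r m (fun g f => ∏ k : Fin m, (A k) (Pi.single (f k) 1) (g k))
/-- `𝔼_i = Σ_j id^{⊗(j-1)} ⊗ e_i ⊗ (κ_i⁻¹)^{⊗(m-j)}` on `V̄^⊗m`. -/
def opEE (r m : ℕ) (a : Fin (2*r+3)) : Module.End Kq (TP r m) :=
  ∑ j : Fin m, tensorOp r m (fun k =>
    if (k : ℕ) < (j : ℕ) then 1 else if k = j then opE r a else opKinv r a)

/-- `𝔽_i = Σ_j κ_i^{⊗(j-1)} ⊗ f_i ⊗ id^{⊗(m-j)}` on `V̄^⊗m`. -/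
def opFF (r m : ℕ) (a : Fin (2*r+3)) : Module.End Kq (TP r m) :=
  ∑ j : Fin m, tensorOp r m (fun k =>
    if (k : ℕ) < (j : ℕ) then opK r a else if k = j then opF r a else 1)

/-- `𝕂_i = κ_i^{⊗m}`. -/
def opKK (r m : ℕ) (a : Fin (2*r+3)) : Module.End Kq (TP r m) :=
  tensorOp r m (fun _ => opK r a)

/-- `𝕂_i⁻¹ = (κ_i⁻¹)^{⊗m}`. -/
def opKKinv (r m : ℕ) (a : Fin (2*r+3)) : Module.End Kq (TP r m) :=
  tensorOp r m (fun _ => opKinv r a)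

/-- `𝕜_i = 𝕂_i 𝕂_{-i}⁻¹` (the index `-i` corresponds to `Fin.rev a`). -/
def opkk (r m : ℕ) (a : Fin (2*r+3)) : Module.End Kq (TP r m) :=
  opKK r m a * opKKinv r m a.rev

/-- `𝕜_i⁻¹ = 𝕂_{-i} 𝕂_i⁻¹`. -/
def opkkInv (r m : ℕ) (a : Fin (2*r+3)) : Module.End Kq (TP r m) :=
  opKK r m a.rev * opKKinv r m a

/-- The index `a` corresponding to `i = 0`. -/
def midI (r : ℕ) : Fin (2*r+3) := ⟨r+1, by omega⟩

/-- `ℬ_i = 𝔼_i + 𝔽_{-i} 𝕂_i⁻¹` for `i ≠ 0`. -/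
def opB (r m : ℕ) (a : Fin (2*r+3)) : Module.End Kq (TP r m) :=
  opEE r m a + opFF r m a.rev * opKKinv r m a

/-- `ℬ_0 = 𝔼_0 + q 𝔽_0 𝕂_0⁻¹ + 𝕂_0⁻¹`. -/
def opB0 (r m : ℕ) : Module.End Kq (TP r m) :=
  opEE r m (midI r) + qv • (opFF r m (midI r) * opKKinv r m (midI r)) + opKKinv r m (midI r)

/-- Generating set of the Levi-type ıquantum group image `Φ(L_q^ı)`:
`ℬ_0`, the `ℬ_i` with `0 ≠ i`, `-r ≤ i ≤ r`, and the `𝕜_i^{±1}` with `-r-1 ≤ i ≤ r+1`. -/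
def LeviSet (r m : ℕ) : Set (Module.End Kq (TP r m)) :=
  {opB0 r m} ∪ (opB r m '' {a | a ≠ midI r ∧ 0 < (a : ℕ) ∧ (a : ℕ) < 2*r+2}) ∪
    Set.range (opkk r m) ∪ Set.range (opkkInv r m)

/-- `Φ(L_q^ı)`, the image of the Levi-type ıquantum group in `End(V̄^⊗m)`. -/
def PhiL (r m : ℕ) : Subalgebra Kq (Module.End Kq (TP r m)) :=
  Algebra.adjoin Kq (LeviSet r m)

/-- The operator `Ψ(H_0)` on `V̄^⊗m`. -/
def R0op (r m : ℕ) : Module.End Kq (TP r m) :=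
  if h : 0 < m then
    { toFun := fun v g =>
        v (Function.update g ⟨0, h⟩ (Fin.rev (g ⟨0, h⟩))) +
          (if g ⟨0, h⟩ < Fin.rev (g ⟨0, h⟩) then (qv⁻¹ - qv) * v g else 0)
      map_add' := fun u v => by
        funext g
        simp only [Pi.add_apply]
        split_ifs <;> ring
      map_smul' := fun s v => by
        funext g
        simp only [Pi.smul_apply, smul_eq_mul, RingHom.id_apply]
        split_ifs <;> ring }
  else 1

/-- The operator `Ψ(H_{p+1})` on `V̄^⊗m`, interchanging tensor positions `p` and `p+1`
(0-based). -/
def Rsw (r m : ℕ) (p : ℕ) : Module.End Kq (TP r m) :=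
  if h : p + 1 < m then
    { toFun := fun v g =>
        if g ⟨p, by omega⟩ = g ⟨p+1, h⟩ then qv⁻¹ * v g
        else v (g ∘ Equiv.swap ⟨p, by omega⟩ ⟨p+1, h⟩) +
          (if g ⟨p+1, h⟩ < g ⟨p, by omega⟩ then (qv⁻¹ - qv) * v g else 0)
      map_add' := fun u v => by
        funext g
        simp only [Pi.add_apply, Function.comp_apply]
        split_ifs <;> ring
      map_smul' := fun s v => by
        funext g
        simp only [Pi.smul_apply, smul_eq_mul, RingHom.id_apply, Function.comp_apply]
        split_ifs <;> ring }
  else 1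

/-- The operator `Ψ(H_i)` on `V̄^⊗m`, for `0 ≤ i ≤ m-1`. -/
def RopN (r m : ℕ) (i : ℕ) : Module.End Kq (TP r m) :=
  if i = 0 then R0op r m else Rsw r m (i - 1)
/-- `j ∈ 𝕀(2r+2)`, i.e. `η_j ∈ V`. -/
def innerI (r : ℕ) (j : Idx r) : Prop := j ≠ botI r ∧ j ≠ topI r

/-- `f` indexes a basis vector of `V^{⊗l} ⊗ η_{r+3/2}^{⊗(m-l)}`. -/
def goodF (r m : ℕ) (l : ℕ) (f : Fin m → Idx r) : Prop :=
  ∀ k : Fin m, ((k : ℕ) < l → innerI r (f k)) ∧ (l ≤ (k : ℕ) → f k = topI r)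

/-- The subspace `V̄_{{1,…,l},∅} = V^{⊗l} ⊗ η_{r+3/2}^{⊗(m-l)}` of `V̄^⊗m`. -/
def Vsub (r m : ℕ) (l : ℕ) : Submodule Kq (TP r m) :=
  Submodule.span Kq {v | ∃ f, goodF r m l f ∧ v = Mf f}

/-- The subspace `V̄_{I,J}` of `V̄^⊗m`. -/
def VIJ (r m : ℕ) (I J : Finset (Fin m)) : Submodule Kq (TP r m) :=
  Submodule.span Kq {v | ∃ f : Fin m → Idx r,
    (∀ k : Fin m, (k ∈ I → innerI r (f k)) ∧ (k ∈ J → f k = botI r) ∧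
      (k ∉ I → k ∉ J → f k = topI r)) ∧ v = Mf f}

/-- The subspace `V̄_l = ⊕_{#I = l, J} V̄_{I,J}` of `V̄^⊗m`. -/
def Vlevel (r m : ℕ) (l : ℕ) : Submodule Kq (TP r m) :=
  Submodule.span Kq {v | ∃ f : Fin m → Idx r,
    Nat.card {k : Fin m // innerI r (f k)} = l ∧ v = Mf f}

/-- The length (number of inversions) of a permutation of `{0, …, l-1}`. -/
def lenPerm {l : ℕ} (σ : Equiv.Perm (Fin l)) : ℕ :=
  (Finset.univ.filter (fun p : Fin l × Fin l => p.1 < p.2 ∧ σ p.2 < σ p.1)).card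

/-- The simple transposition interchanging `p` and `p+1` (0-based) in `𝔖_l`;
this is the paper's `s_{p+1}`. -/
def adjSwap (l : ℕ) (p : ℕ) : Equiv.Perm (Fin l) :=
  if h : p + 1 < l then Equiv.swap ⟨p, by omega⟩ ⟨p+1, h⟩ else 1

/-- The first descent of a permutation, if any. -/
def descentIdx {l : ℕ} (σ : Equiv.Perm (Fin l)) : Option ℕ :=
  (List.range l).find? (fun p =>
    if h : p + 1 < l then decide (σ ⟨p+1, h⟩ < σ ⟨p, by omega⟩) else false)

/-- Canonical reduced word construction (with fuel). -/
def permWordAux {l : ℕ} : ℕ → Equiv.Perm (Fin l) → List ℕ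
  | 0, _ => []
  | (fuel+1), σ =>
    match descentIdx σ with
    | none => []
    | some p => permWordAux fuel (σ * adjSwap l p) ++ [p]

/-- A canonical reduced word for `σ`: `σ = s_{p₁+1} ⋯ s_{p_k+1}` (paper indexing)
where `permWord σ = [p₁, …, p_k]`, and `k = ℓ(σ)`. -/
def permWord {l : ℕ} (σ : Equiv.Perm (Fin l)) : List ℕ := permWordAux (lenPerm σ) σ

/-- The operator `Ψ(H_σ)` on `V̄^⊗m` for a permutation `σ ∈ 𝔖_l` (`l ≤ m`), where
`H_σ = H_{i₁} ⋯ H_{i_k}` for a reduced expression `σ = s_{i₁} ⋯ s_{i_k}`; since `Ψ` is an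
anti-homomorphism this is the product of the `Ψ(H_i)` in reversed order. -/
def opPerm (r m : ℕ) {l : ℕ} (σ : Equiv.Perm (Fin l)) : Module.End Kq (TP r m) :=
  (((permWord σ).map (fun p => RopN r m (p+1))).reverse).prod

/-- `A` is a finite product of the operators `Ψ(H_i)^{±1}`, `0 ≤ i ≤ m-1`. -/
def IsRWord (r m : ℕ) (A : Module.End Kq (TP r m)) : Prop :=
  ∃ ws : List (Module.End Kq (TP r m)), A = ws.prod ∧
    ∀ u ∈ ws, ∃ i : ℕ, i < m ∧
      (u = RopN r m i ∨ (u * RopN r m i = 1 ∧ RopN r m i * u = 1))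
/-- Generator `H_i` of the free algebra on `m` letters. -/
def Hvar (m : ℕ) (i : Fin m) : FreeAlgebra Kq (Fin m) := FreeAlgebra.ι Kq i

/-- The defining relations of the Iwahori–Hecke algebra `H(B_m)` of type `B_m`. -/
inductive HBrel (m : ℕ) : FreeAlgebra Kq (Fin m) → FreeAlgebra Kq (Fin m) → Prop
  | quad (i : Fin m) :
      HBrel m ((Hvar m i - algebraMap Kq _ qv⁻¹) * (Hvar m i + algebraMap Kq _ qv)) 0
  | braid (i : ℕ) (h1 : 1 ≤ i) (h2 : i + 1 < m) :
      HBrel m (Hvar m ⟨i, by omega⟩ * Hvar m ⟨i+1, h2⟩ * Hvar m ⟨i, by omega⟩)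
              (Hvar m ⟨i+1, h2⟩ * Hvar m ⟨i, by omega⟩ * Hvar m ⟨i+1, h2⟩)
  | comm (i j : Fin m) (h : (i : ℕ) + 1 < (j : ℕ) ∨ (j : ℕ) + 1 < (i : ℕ)) :
      HBrel m (Hvar m i * Hvar m j) (Hvar m j * Hvar m i)
  | braid0 (h : 1 < m) :
      HBrel m (Hvar m ⟨0, by omega⟩ * Hvar m ⟨1, h⟩ * Hvar m ⟨0, by omega⟩ * Hvar m ⟨1, h⟩)
              (Hvar m ⟨1, h⟩ * Hvar m ⟨0, by omega⟩ * Hvar m ⟨1, h⟩ * Hvar m ⟨0, by omega⟩)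

/-- The Iwahori–Hecke algebra `H(B_m)` of type `B_m` over `ℚ(q)`. -/
abbrev HeckeB (m : ℕ) := RingQuot (HBrel m)

/-- The generator `H_i ∈ H(B_m)`. -/
def Hgen (m : ℕ) (i : Fin m) : HeckeB m := RingQuot.mkAlgHom Kq (HBrel m) (Hvar m i)

/-- The generator `H_j ∈ H(B_m)` with out-of-range indices sent to `1`. -/
def HgenN (m : ℕ) (j : ℕ) : HeckeB m := if h : j < m then Hgen m ⟨j, h⟩ else 1

/-- The element `H_w ∈ H(B_m)` for `w ∈ 𝔖_m ⊂ 𝒲(B_m)`, defined via a reduced expression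
for `w` (well defined by Matsumoto's theorem). -/
def HpermB (m : ℕ) (w : Equiv.Perm (Fin m)) : HeckeB m :=
  ((permWord w).map (fun p => HgenN m (p+1))).prod

/-- Generators of the duplex Hecke algebra: the `T_i` and the `x_σ^{(l)}`. -/
def DGen (m : ℕ) : Type := (Fin m) ⊕ (Σ l : Fin (m+1), Equiv.Perm (Fin (l : ℕ)))

/-- The generator `T_i` of the free algebra. -/
def Tvar (m : ℕ) (i : Fin m) : FreeAlgebra Kq (DGen m) := FreeAlgebra.ι Kq (Sum.inl i)

/-- The generator `x_σ^{(l)}` of the free algebra. -/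
def Xvar (m : ℕ) (l : Fin (m+1)) (σ : Equiv.Perm (Fin (l : ℕ))) : FreeAlgebra Kq (DGen m) :=
  FreeAlgebra.ι Kq (Sum.inr ⟨l, σ⟩)

/-- The defining relations of the duplex Hecke algebra `𝓗_m` of type `B`. -/
inductive DHrel (m : ℕ) : FreeAlgebra Kq (DGen m) → FreeAlgebra Kq (DGen m) → Prop
  | quadT (i : Fin m) :
      DHrel m ((Tvar m i + algebraMap Kq _ qv) * (Tvar m i - algebraMap Kq _ qv⁻¹)) 0
  | braidT (i : ℕ) (h1 : 1 ≤ i) (h2 : i + 1 < m) :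
      DHrel m (Tvar m ⟨i, by omega⟩ * Tvar m ⟨i+1, h2⟩ * Tvar m ⟨i, by omega⟩)
              (Tvar m ⟨i+1, h2⟩ * Tvar m ⟨i, by omega⟩ * Tvar m ⟨i+1, h2⟩)
  | commT (i j : Fin m) (h : (i : ℕ) + 1 < (j : ℕ) ∨ (j : ℕ) + 1 < (i : ℕ)) :
      DHrel m (Tvar m i * Tvar m j) (Tvar m j * Tvar m i)
  | braid0T (h : 1 < m) :
      DHrel m (Tvar m ⟨0, by omega⟩ * Tvar m ⟨1, h⟩ * Tvar m ⟨0, by omega⟩ * Tvar m ⟨1, h⟩)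
              (Tvar m ⟨1, h⟩ * Tvar m ⟨0, by omega⟩ * Tvar m ⟨1, h⟩ * Tvar m ⟨0, by omega⟩)
  | xRightUp (l : Fin (m+1)) (σ : Equiv.Perm (Fin (l : ℕ))) (p : ℕ) (hp : p + 1 < (l : ℕ))
      (hlen : lenPerm (σ * adjSwap (l : ℕ) p) = lenPerm σ + 1) :
      DHrel m (Xvar m l σ * Xvar m l (adjSwap (l : ℕ) p)) (Xvar m l (σ * adjSwap (l : ℕ) p))
  | xRightDown (l : Fin (m+1)) (σ : Equiv.Perm (Fin (l : ℕ))) (p : ℕ) (hp : p + 1 < (l : ℕ))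
      (hlen : lenPerm (σ * adjSwap (l : ℕ) p) + 1 = lenPerm σ) :
      DHrel m (Xvar m l σ * Xvar m l (adjSwap (l : ℕ) p))
              (Xvar m l (σ * adjSwap (l : ℕ) p) + algebraMap Kq _ (qv⁻¹ - qv) * Xvar m l σ)
  | xLeftUp (l : Fin (m+1)) (σ : Equiv.Perm (Fin (l : ℕ))) (p : ℕ) (hp : p + 1 < (l : ℕ))
      (hlen : lenPerm (adjSwap (l : ℕ) p * σ) = lenPerm σ + 1) :
      DHrel m (Xvar m l (adjSwap (l : ℕ) p) * Xvar m l σ) (Xvar m l (adjSwap (l : ℕ) p * σ))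
  | xLeftDown (l : Fin (m+1)) (σ : Equiv.Perm (Fin (l : ℕ))) (p : ℕ) (hp : p + 1 < (l : ℕ))
      (hlen : lenPerm (adjSwap (l : ℕ) p * σ) + 1 = lenPerm σ) :
      DHrel m (Xvar m l (adjSwap (l : ℕ) p) * Xvar m l σ)
              (Xvar m l (adjSwap (l : ℕ) p * σ) + algebraMap Kq _ (qv⁻¹ - qv) * Xvar m l σ)
  | xOrtho (l k : Fin (m+1)) (h : l ≠ k) (σ : Equiv.Perm (Fin (l : ℕ)))
      (γ : Equiv.Perm (Fin (k : ℕ))) :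
      DHrel m (Xvar m l σ * Xvar m k γ) 0
  | TxMid (i : ℕ) (l : Fin (m+1)) (h0 : 0 < i) (hil : i < (l : ℕ))
      (σ : Equiv.Perm (Fin (l : ℕ))) :
      DHrel m (Tvar m ⟨i, by have := l.2; omega⟩ * Xvar m l σ)
              (Xvar m l (adjSwap (l : ℕ) (i-1)) * Xvar m l σ)
  | xTMid (i : ℕ) (l : Fin (m+1)) (h0 : 0 < i) (hil : i < (l : ℕ))
      (σ : Equiv.Perm (Fin (l : ℕ))) :
      DHrel m (Xvar m l σ * Tvar m ⟨i, by have := l.2; omega⟩)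
              (Xvar m l σ * Xvar m l (adjSwap (l : ℕ) (i-1)))
  | TxBig (i : Fin m) (l : Fin (m+1)) (h : (l : ℕ) < (i : ℕ)) (σ : Equiv.Perm (Fin (l : ℕ))) :
      DHrel m (Tvar m i * Xvar m l σ) (algebraMap Kq _ qv⁻¹ * Xvar m l σ)
  | xTBig (i : Fin m) (l : Fin (m+1)) (h : (l : ℕ) < (i : ℕ)) (σ : Equiv.Perm (Fin (l : ℕ))) :
      DHrel m (Xvar m l σ * Tvar m i) (algebraMap Kq _ qv⁻¹ * Xvar m l σ)

/-- The duplex Hecke algebra `𝓗_m` of type `B` over `ℚ(q)`. -/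
abbrev DuplexH (m : ℕ) := RingQuot (DHrel m)

/-- The generator `T_i ∈ 𝓗_m`. -/
def Tg (m : ℕ) (i : Fin m) : DuplexH m := RingQuot.mkAlgHom Kq (DHrel m) (Tvar m i)

/-- The generator `x_σ^{(l)} ∈ 𝓗_m`. -/
def Xg (m : ℕ) (l : Fin (m+1)) (σ : Equiv.Perm (Fin (l : ℕ))) : DuplexH m :=
  RingQuot.mkAlgHom Kq (DHrel m) (Xvar m l σ)

/-! ### Lengths and reduced words -/

theorem adjSwap_of_lt {l p : ℕ} (h : p + 1 < l) :
    adjSwap l p = Equiv.swap ⟨p, by omega⟩ ⟨p+1, h⟩ := by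
  simp [adjSwap, h]

theorem adjSwap_mul_self (l p : ℕ) : adjSwap l p * adjSwap l p = 1 := by
  unfold adjSwap
  split_ifs <;> simp

theorem mul_adjSwap_cancel {l : ℕ} (σ : Equiv.Perm (Fin l)) (p : ℕ) :
    σ * adjSwap l p * adjSwap l p = σ := by
  rw [mul_assoc, adjSwap_mul_self, mul_one]

theorem adjSwap_val {l p : ℕ} (h : p + 1 < l) (x : Fin l) :
    ((adjSwap l p x : Fin l) : ℕ) =
      if (x : ℕ) = p then p + 1 else if (x : ℕ) = p + 1 then p else x := by
  rw [adjSwap_of_lt h, Equiv.swap_apply_def]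
  simp only [Fin.ext_iff]
  split_ifs <;> simp

theorem adjSwap_left {l p : ℕ} (h : p + 1 < l) :
    adjSwap l p ⟨p, by omega⟩ = ⟨p+1, h⟩ := by
  apply Fin.ext; simp [adjSwap_val h]

theorem adjSwap_right {l p : ℕ} (h : p + 1 < l) :
    adjSwap l p ⟨p+1, h⟩ = ⟨p, by omega⟩ := by
  apply Fin.ext; simp [adjSwap_val h]

theorem adjSwap_other {l p : ℕ} (x : Fin l) (h1 : (x : ℕ) ≠ p) (h2 : (x : ℕ) ≠ p + 1) :
    adjSwap l p x = x := by
  by_cases h : p + 1 < l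
  · apply Fin.ext; simp [adjSwap_val h, h1, h2]
  · simp [adjSwap, h]

theorem adjSwap_comm (l : ℕ) {p k : ℕ} (h : p + 1 < k) :
    adjSwap l p * adjSwap l k = adjSwap l k * adjSwap l p := by
  by_cases hk : k + 1 < l
  · have hp : p + 1 < l := by omega
    ext x
    simp only [Equiv.Perm.mul_apply, adjSwap_val hk, adjSwap_val hp]
    split_ifs <;> omega
  · simp [adjSwap, hk]

theorem adjSwap_braid {l p : ℕ} (h : p + 2 < l) :
    adjSwap l p * adjSwap l (p+1) * adjSwap l p =
      adjSwap l (p+1) * adjSwap l p * adjSwap l (p+1) := by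
  have hk : p + 1 + 1 < l := by omega
  have hp : p + 1 < l := by omega
  ext x
  simp only [Equiv.Perm.mul_apply, adjSwap_val hk, adjSwap_val hp]
  split_ifs <;> omega

/-- `w` has a descent at `p`: `w (p+1) < w p`. -/
def IsDescent {l : ℕ} (w : Equiv.Perm (Fin l)) (p : ℕ) : Prop :=
  ∃ h : p + 1 < l, w ⟨p+1, h⟩ < w ⟨p, by omega⟩

/-- The set of inversions of `σ`, so that `lenPerm σ` is its cardinality. -/
def invs {l : ℕ} (σ : Equiv.Perm (Fin l)) : Finset (Fin l × Fin l) :=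
  Finset.univ.filter (fun x : Fin l × Fin l => x.1 < x.2 ∧ σ x.2 < σ x.1)

theorem mem_invs {l : ℕ} {σ : Equiv.Perm (Fin l)} {x y : Fin l} :
    (x, y) ∈ invs σ ↔ x < y ∧ σ y < σ x := by
  simp [invs]

theorem lenPerm_eq_card {l : ℕ} (σ : Equiv.Perm (Fin l)) : lenPerm σ = (invs σ).card := rfl

/-- Away from the pair `(p, p+1)` itself, `sₚ × sₚ` matches the inversions of `σ` with those of
`σ sₚ`. -/
theorem card_inv_erase {l : ℕ} (σ : Equiv.Perm (Fin l)) {p : ℕ} (h : p + 1 < l) :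
    ((invs σ).erase (⟨p, by omega⟩, ⟨p+1, h⟩)).card =
    ((invs (σ * adjSwap l p)).erase (⟨p, by omega⟩, ⟨p+1, h⟩)).card := by
  have key : ∀ x y : Fin l, x < y → ¬ ((x : ℕ) = p ∧ (y : ℕ) = p + 1) →
      adjSwap l p x < adjSwap l p y ∧
        ¬ (((adjSwap l p x : Fin l) : ℕ) = p ∧ ((adjSwap l p y : Fin l) : ℕ) = p + 1) := by
    intro x y hxy hne
    rw [Fin.lt_def] at hxy ⊢
    rw [adjSwap_val h, adjSwap_val h]
    split_ifs <;> omega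
  have inv : ∀ x, adjSwap l p (adjSwap l p x) = x := fun x => by
    rw [← Equiv.Perm.mul_apply, adjSwap_mul_self, Equiv.Perm.one_apply]
  refine Finset.card_bij' (fun x _ => (adjSwap l p x.1, adjSwap l p x.2))
    (fun x _ => (adjSwap l p x.1, adjSwap l p x.2)) ?_ ?_ ?_ ?_
  · rintro ⟨x, y⟩ hx
    simp only [Finset.mem_erase, mem_invs, ne_eq,
      Prod.mk.injEq, Fin.ext_iff, Equiv.Perm.mul_apply, inv] at hx ⊢
    obtain ⟨h1, h2, h3⟩ := hx
    exact ⟨(key x y h2 h1).2, (key x y h2 h1).1, h3⟩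
  · rintro ⟨x, y⟩ hx
    simp only [Finset.mem_erase, mem_invs, ne_eq,
      Prod.mk.injEq, Fin.ext_iff, Equiv.Perm.mul_apply] at hx ⊢
    obtain ⟨h1, h2, h3⟩ := hx
    exact ⟨(key x y h2 h1).2, (key x y h2 h1).1, h3⟩
  · rintro ⟨x, y⟩ _
    simp [inv]
  · rintro ⟨x, y⟩ _
    simp [inv]

theorem lenPerm_of_isDescent {l : ℕ} {w : Equiv.Perm (Fin l)} {p : ℕ} (hd : IsDescent w p) :
    lenPerm w = lenPerm (w * adjSwap l p) + 1 := by
  obtain ⟨h, hd⟩ := hd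
  have key := card_inv_erase w h
  have hm : ((⟨p, by omega⟩, ⟨p+1, h⟩) : Fin l × Fin l) ∈ invs w :=
    mem_invs.2 ⟨by simp [Fin.lt_def], hd⟩
  have hn : ((⟨p, by omega⟩, ⟨p+1, h⟩) : Fin l × Fin l) ∉ invs (w * adjSwap l p) := by
    rw [mem_invs, Equiv.Perm.mul_apply, Equiv.Perm.mul_apply, adjSwap_left h, adjSwap_right h]
    exact fun e => hd.not_gt e.2
  rw [Finset.card_erase_of_mem hm, Finset.erase_eq_of_notMem hn] at key
  have pos : 0 < (invs w).card := Finset.card_pos.2 ⟨_, hm⟩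
  rw [lenPerm_eq_card, lenPerm_eq_card]
  omega

theorem isDescent_mul_adjSwap {l : ℕ} (w : Equiv.Perm (Fin l)) {p : ℕ} (h : p + 1 < l) :
    IsDescent (w * adjSwap l p) p ↔ ¬ IsDescent w p := by
  have hne : w ⟨p, by omega⟩ ≠ w ⟨p+1, h⟩ := fun e => by
    have := congrArg Fin.val (w.injective e)
    simp at this
  simp only [IsDescent, h, exists_true_left, Equiv.Perm.mul_apply, adjSwap_left h,
    adjSwap_right h]
  constructor
  · exact fun a => a.not_gt
  · exact fun a => lt_of_le_of_ne (not_lt.1 a) hne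

theorem lenPerm_of_not_isDescent {l : ℕ} {w : Equiv.Perm (Fin l)} {p : ℕ} (h : p + 1 < l)
    (hd : ¬ IsDescent w p) : lenPerm (w * adjSwap l p) = lenPerm w + 1 := by
  have := lenPerm_of_isDescent ((isDescent_mul_adjSwap w h).2 hd)
  rwa [mul_adjSwap_cancel] at this

theorem lenPerm_inv {l : ℕ} (σ : Equiv.Perm (Fin l)) : lenPerm σ⁻¹ = lenPerm σ := by
  unfold lenPerm
  refine Finset.card_bij' (fun x _ => (σ⁻¹ x.2, σ⁻¹ x.1)) (fun x _ => (σ x.2, σ x.1)) ?_ ?_ ?_ ?_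
  · rintro ⟨x, y⟩ hx
    simpa [and_comm] using hx
  · rintro ⟨x, y⟩ hx
    simpa [and_comm] using hx
  · rintro ⟨x, y⟩ _
    simp
  · rintro ⟨x, y⟩ _
    simp

theorem adjSwap_inv (l p : ℕ) : (adjSwap l p)⁻¹ = adjSwap l p :=
  inv_eq_of_mul_eq_one_left (adjSwap_mul_self l p)

theorem lenPerm_adjSwap_mul_le {l : ℕ} (σ : Equiv.Perm (Fin l)) {p : ℕ} (h : p + 1 < l) :
    lenPerm (adjSwap l p * σ) ≤ lenPerm σ + 1 := by
  rw [← lenPerm_inv (adjSwap l p * σ), mul_inv_rev, adjSwap_inv, ← lenPerm_inv σ]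
  by_cases hd : IsDescent σ⁻¹ p
  · have := lenPerm_of_isDescent hd
    omega
  · exact (lenPerm_of_not_isDescent h hd).le

theorem isDescent_of_descentIdx {l : ℕ} {w : Equiv.Perm (Fin l)} {p : ℕ}
    (h : descentIdx w = some p) : IsDescent w p := by
  have := List.find?_some h
  by_cases hp : p + 1 < l
  · simp only [hp, dite_true, decide_eq_true_eq] at this
    exact ⟨hp, this⟩
  · simp [hp] at this

theorem not_isDescent_of_descentIdx {l : ℕ} {w : Equiv.Perm (Fin l)}
    (h : descentIdx w = none) (p : ℕ) : ¬ IsDescent w p := by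
  rintro ⟨hp, hd⟩
  have := List.find?_eq_none.1 h p (List.mem_range.2 (by omega))
  simp [hp, hd] at this

theorem eq_one_of_no_descent {l : ℕ} {w : Equiv.Perm (Fin l)}
    (h : ∀ p, ¬ IsDescent w p) : w = 1 := by
  have mono : StrictMono w := by
    cases l with
    | zero => intro a; exact a.elim0
    | succ n =>
      rw [Fin.strictMono_iff_lt_succ]
      intro i
      have hi : (i : ℕ) + 1 < n + 1 := by omega
      have h1 := h i
      simp only [IsDescent, hi, exists_true_left, not_lt] at h1
      refine lt_of_le_of_ne h1 fun e => ?_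
      have := congrArg Fin.val (w.injective e)
      simp at this
  have : (mono.orderIsoOfSurjective w w.surjective) = OrderIso.refl _ := Subsingleton.elim _ _
  ext x
  exact congrArg Fin.val (DFunLike.congr_fun this x)

theorem permWord_of_none {l : ℕ} {w : Equiv.Perm (Fin l)} (h : descentIdx w = none) :
    permWord w = [] := by
  unfold permWord
  cases lenPerm w with
  | zero => rfl
  | succ n => simp [permWordAux, h]

theorem permWord_of_some {l : ℕ} {w : Equiv.Perm (Fin l)} {p : ℕ} (h : descentIdx w = some p) :
    permWord w = permWord (w * adjSwap l p) ++ [p] := by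
  unfold permWord
  rw [lenPerm_of_isDescent (isDescent_of_descentIdx h)]
  simp [permWordAux, h]

theorem lt_of_mem_permWord {l : ℕ} (w : Equiv.Perm (Fin l)) : ∀ p ∈ permWord w, p + 1 < l := by
  induction hn : lenPerm w generalizing w with
  | zero =>
    intro p hp
    simp [permWord, hn, permWordAux] at hp
  | succ n ih =>
    cases hd : descentIdx w with
    | none => simp [permWord_of_none hd]
    | some d =>
      have hw := isDescent_of_descentIdx hd
      have hl := lenPerm_of_isDescent hw
      rw [permWord_of_some hd]
      intro p hp
      rcases List.mem_append.1 hp with hp | hp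
      · exact ih _ (by omega) p hp
      · rw [List.mem_singleton.1 hp]; exact hw.1

/-! ### Matsumoto's theorem for the symmetric group -/

/-- The product `t_{p₁} ⋯ t_{p_k}` along the canonical reduced word `[p₁, …, p_k]` of `σ`. -/
def wordProd {A : Type*} [Monoid A] (t : ℕ → A) {l : ℕ} (σ : Equiv.Perm (Fin l)) : A :=
  ((permWord σ).map t).prod

/-- The braid relations of type `A_{l-1}` for `t_0, …, t_{l-2}`. -/
structure BraidRel {A : Type*} [Monoid A] (l : ℕ) (t : ℕ → A) : Prop where
  comm : ∀ p k, p + 1 < k → k + 1 < l → t p * t k = t k * t p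
  braid : ∀ p, p + 2 < l → t p * t (p+1) * t p = t (p+1) * t p * t (p+1)

section Words

variable {A : Type*} [Monoid A] {l : ℕ} {t : ℕ → A}

theorem wordProd_one : wordProd t (1 : Equiv.Perm (Fin l)) = 1 := by
  have : descentIdx (1 : Equiv.Perm (Fin l)) = none := by
    cases h : descentIdx (1 : Equiv.Perm (Fin l)) with
    | none => rfl
    | some p =>
      obtain ⟨_, h⟩ := isDescent_of_descentIdx h
      simp [Fin.lt_def] at h
  simp [wordProd, permWord_of_none this]

theorem wordProd_of_some {w : Equiv.Perm (Fin l)} {p : ℕ} (h : descentIdx w = some p) :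
    wordProd t w = wordProd t (w * adjSwap l p) * t p := by
  simp [wordProd, permWord_of_some h]

theorem isDescent_far {w : Equiv.Perm (Fin l)} {p k : ℕ} (hp : IsDescent w p)
    (h : p + 1 < k ∨ k + 1 < p) : IsDescent (w * adjSwap l k) p := by
  obtain ⟨h1, h2⟩ := hp
  refine ⟨h1, ?_⟩
  rw [Equiv.Perm.mul_apply, Equiv.Perm.mul_apply, adjSwap_other _ _ _, adjSwap_other _ _ _]
  · exact h2
  all_goals (simp only; omega)

/-- If both `p` and `p+1` are descents, either one can be the last letter of a reduced word, and
the braid relation identifies the two resulting products. -/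
theorem wordProd_adjacent (ht : BraidRel l t) {w : Equiv.Perm (Fin l)}
    (ih : ∀ w' : Equiv.Perm (Fin l), lenPerm w' < lenPerm w → ∀ p, IsDescent w' p →
      wordProd t w' = wordProd t (w' * adjSwap l p) * t p)
    {p : ℕ} (h1 : IsDescent w p) (h2 : IsDescent w (p+1)) :
    wordProd t (w * adjSwap l p) * t p = wordProd t (w * adjSwap l (p+1)) * t (p+1) := by
  have l1 := lenPerm_of_isDescent h1
  have l2 := lenPerm_of_isDescent h2
  obtain ⟨hp, d1⟩ := h1
  obtain ⟨hp2, d2⟩ := h2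
  have o1 : adjSwap l p ⟨p+1+1, hp2⟩ = ⟨p+1+1, hp2⟩ :=
    adjSwap_other _ (by simp only; omega) (by simp only; omega)
  have o2 : adjSwap l (p+1) ⟨p, by omega⟩ = ⟨p, by omega⟩ :=
    adjSwap_other _ (by simp only; omega) (by simp only; omega)
  have a1 : IsDescent (w * adjSwap l p) (p+1) := ⟨hp2, by
    simpa [Equiv.Perm.mul_apply, o1, adjSwap_right hp] using d2.trans d1⟩
  have a2 : IsDescent (w * adjSwap l p * adjSwap l (p+1)) p := ⟨hp, by
    simpa [Equiv.Perm.mul_apply, o2, o1, adjSwap_left hp, adjSwap_left hp2] using d2⟩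
  have b1 : IsDescent (w * adjSwap l (p+1)) p := ⟨hp, by
    simpa [Equiv.Perm.mul_apply, o2, adjSwap_left hp2] using d2.trans d1⟩
  have b2 : IsDescent (w * adjSwap l (p+1) * adjSwap l p) (p+1) := ⟨hp2, by
    simpa [Equiv.Perm.mul_apply, o2, o1, adjSwap_right hp, adjSwap_right hp2] using d1⟩
  have m1 := lenPerm_of_isDescent a1
  have m2 := lenPerm_of_isDescent b1
  rw [ih _ (by omega) _ a1, ih _ (by omega) _ a2, ih _ (by omega) _ b1, ih _ (by omega) _ b2]
  have hb : w * adjSwap l p * adjSwap l (p+1) * adjSwap l p =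
      w * adjSwap l (p+1) * adjSwap l p * adjSwap l (p+1) := by
    simpa only [mul_assoc] using congrArg (w * ·) (adjSwap_braid (l := l) (p := p) (by omega))
  rw [hb, mul_assoc, mul_assoc, ← mul_assoc (t p), ht.braid p (by omega)]
  simp only [mul_assoc]

/-- Two far-apart descents `p` and `k`: either may be the last letter, as `t p` and `t k` commute. -/
theorem wordProd_far (ht : BraidRel l t) {w : Equiv.Perm (Fin l)}
    (ih : ∀ w' : Equiv.Perm (Fin l), lenPerm w' < lenPerm w → ∀ p, IsDescent w' p →
      wordProd t w' = wordProd t (w' * adjSwap l p) * t p)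
    {p k : ℕ} (h1 : IsDescent w p) (h2 : IsDescent w k) (hpk : p + 1 < k) :
    wordProd t (w * adjSwap l p) * t p = wordProd t (w * adjSwap l k) * t k := by
  have l1 := lenPerm_of_isDescent h1
  have l2 := lenPerm_of_isDescent h2
  rw [ih _ (by omega) k (isDescent_far h2 (Or.inr hpk)),
    ih _ (by omega) p (isDescent_far h1 (Or.inl hpk)), mul_assoc, mul_assoc,
    mul_assoc, mul_assoc, ht.comm p k hpk h2.1, adjSwap_comm l hpk]

/-- Matsumoto's theorem: any descent of `w` may serve as the last letter. -/
theorem wordProd_of_isDescent (ht : BraidRel l t) (w : Equiv.Perm (Fin l)) (p : ℕ)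
    (hp : IsDescent w p) : wordProd t w = wordProd t (w * adjSwap l p) * t p := by
  induction hn : lenPerm w using Nat.strong_induction_on generalizing w p with
  | _ n ih =>
    have ih' : ∀ w' : Equiv.Perm (Fin l), lenPerm w' < lenPerm w → ∀ p, IsDescent w' p →
        wordProd t w' = wordProd t (w' * adjSwap l p) * t p :=
      fun w' hw' p hp => ih _ (hn ▸ hw') w' p hp rfl
    cases hd : descentIdx w with
    | none => exact absurd hp (not_isDescent_of_descentIdx hd p)
    | some d =>
      have hw := isDescent_of_descentIdx hd
      rw [wordProd_of_some hd]
      rcases lt_trichotomy p d with h | rfl | h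
      · rcases (Nat.succ_le_of_lt h).eq_or_lt with rfl | h'
        · exact (wordProd_adjacent ht ih' hp hw).symm
        · exact (wordProd_far ht ih' hp hw h').symm
      · rfl
      · rcases (Nat.succ_le_of_lt h).eq_or_lt with rfl | h'
        · exact wordProd_adjacent ht ih' hw hp
        · exact wordProd_far ht ih' hw hp h'

theorem wordProd_mul_up (ht : BraidRel l t) {σ : Equiv.Perm (Fin l)} {p : ℕ} (hp : p + 1 < l)
    (hlen : lenPerm (σ * adjSwap l p) = lenPerm σ + 1) :
    wordProd t (σ * adjSwap l p) = wordProd t σ * t p := by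
  have hd : ¬ IsDescent σ p := fun h => by
    have := lenPerm_of_isDescent h
    omega
  rw [wordProd_of_isDescent ht _ p ((isDescent_mul_adjSwap σ hp).2 hd), mul_adjSwap_cancel]

theorem lenPerm_one : lenPerm (1 : Equiv.Perm (Fin l)) = 0 := by
  simp only [lenPerm, Finset.card_eq_zero, Finset.filter_eq_empty_iff]
  rintro x - ⟨h1, h2⟩
  exact h1.not_gt h2

theorem wordProd_adjSwap (ht : BraidRel l t) {p : ℕ} (hp : p + 1 < l) :
    wordProd t (adjSwap l p) = t p := by
  have hd : ¬ IsDescent (1 : Equiv.Perm (Fin l)) p := fun h => by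
    have := lenPerm_of_isDescent h
    rw [lenPerm_one] at this
    omega
  have := wordProd_mul_up ht hp (lenPerm_of_not_isDescent hp hd)
  rwa [one_mul, wordProd_one, one_mul] at this

/-- The left-handed counterpart of `wordProd_mul_up`, by stripping letters of `σ` on the right:
since a simple reflection changes the length by at most one on either side, all the
intermediate products stay reduced. -/
theorem wordProd_up_mul (ht : BraidRel l t) {σ : Equiv.Perm (Fin l)} {p : ℕ} (hp : p + 1 < l)
    (hlen : lenPerm (adjSwap l p * σ) = lenPerm σ + 1) :
    wordProd t (adjSwap l p * σ) = t p * wordProd t σ := by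
  induction hn : lenPerm σ using Nat.strong_induction_on generalizing σ with
  | _ n ih =>
    cases hd : descentIdx σ with
    | none =>
      rw [eq_one_of_no_descent (not_isDescent_of_descentIdx hd), mul_one, wordProd_one, mul_one,
        wordProd_adjSwap ht hp]
    | some d =>
      have hσ := isDescent_of_descentIdx hd
      have l1 := lenPerm_of_isDescent hσ
      have l2 := lenPerm_adjSwap_mul_le (σ * adjSwap l d) hp
      have l3 : lenPerm (adjSwap l p * (σ * adjSwap l d)) + 1 = lenPerm (adjSwap l p * σ) := by
        rw [← mul_assoc] at l2 ⊢
        by_cases h : IsDescent (adjSwap l p * σ) d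
        · exact (lenPerm_of_isDescent h).symm
        · have := lenPerm_of_not_isDescent hσ.1 h
          omega
      have h4 := ih _ (by omega) (σ := σ * adjSwap l d) (by omega) rfl
      have h5 := wordProd_mul_up ht (σ := adjSwap l p * (σ * adjSwap l d)) hσ.1 (by
        rw [← mul_assoc, mul_adjSwap_cancel, mul_assoc]; omega)
      rw [h4, mul_assoc (adjSwap l p), mul_adjSwap_cancel] at h5
      rw [h5, wordProd_of_some hd, mul_assoc]

end Words

/-! ### The Hecke relations for the operators `Ψ(H_i)` -/

theorem qv_ne_zero : qv ≠ 0 := RatFunc.X_ne_zero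

/-- The formula for `Ψ(H_{p+1})` on a function of the two labels in positions `p`, `p+1`. -/
def sw2 {α : Type*} [LinearOrder α] (w : α → α → Kq) (a b : α) : Kq :=
  if a = b then qv⁻¹ * w a b else w b a + (if b < a then (qv⁻¹ - qv) * w a b else 0)

theorem Rsw_apply {r m p : ℕ} (h : p + 1 < m) (v : TP r m) (g : Fin m → Idx r) :
    Rsw r m p v g = if g ⟨p, by omega⟩ = g ⟨p+1, h⟩ then qv⁻¹ * v g
        else v (g ∘ adjSwap m p) +
          (if g ⟨p+1, h⟩ < g ⟨p, by omega⟩ then (qv⁻¹ - qv) * v g else 0) := by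
  rw [adjSwap_of_lt h]
  simp only [Rsw, h, dite_true]
  rfl

theorem R0op_apply {r m : ℕ} (h : 0 < m) (v : TP r m) (g : Fin m → Idx r) :
    R0op r m v g = v (Function.update g ⟨0, h⟩ (Fin.rev (g ⟨0, h⟩))) +
          (if g ⟨0, h⟩ < Fin.rev (g ⟨0, h⟩) then (qv⁻¹ - qv) * v g else 0) := by
  simp only [R0op, h, dite_true]
  rfl

/-- `g` with its labels in positions `p, p+1, p+2` replaced by `a, b, c`. -/
def fill3 {r m : ℕ} (g : Fin m → Idx r) (p : ℕ) (a b c : Idx r) : Fin m → Idx r :=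
  fun k => if (k : ℕ) = p then a else if (k : ℕ) = p + 1 then b else
    if (k : ℕ) = p + 2 then c else g k

theorem Rsw_fill3_left {r m p : ℕ} (h : p + 2 < m) (v : TP r m) (g : Fin m → Idx r)
    (a b c : Idx r) :
    Rsw r m p v (fill3 g p a b c) = sw2 (fun x y => v (fill3 g p x y c)) a b := by
  have hp : p + 1 < m := by omega
  have e : fill3 g p a b c ∘ adjSwap m p = fill3 g p b a c := by
    funext k
    simp only [Function.comp_apply, fill3, adjSwap_val hp]
    by_cases h1 : (k : ℕ) = p
    · simp [h1]
    · by_cases h2 : (k : ℕ) = p + 1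
      · simp [h2]
      · simp [h1, h2, adjSwap_other k h1 h2]
  rw [Rsw_apply hp, e]
  simp [fill3, sw2]

theorem Rsw_fill3_right {r m p : ℕ} (h : p + 2 < m) (v : TP r m) (g : Fin m → Idx r)
    (a b c : Idx r) :
    Rsw r m (p+1) v (fill3 g p a b c) = sw2 (fun x y => v (fill3 g p a x y)) b c := by
  have hp : p + 1 + 1 < m := by omega
  have n : ¬ p + 1 + 1 = p := by omega
  have e : fill3 g p a b c ∘ adjSwap m (p+1) = fill3 g p a c b := by
    funext k
    simp only [Function.comp_apply, fill3, adjSwap_val hp]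
    by_cases h1 : (k : ℕ) = p + 1
    · simp [h1, n]
    · by_cases h2 : (k : ℕ) = p + 1 + 1
      · simp [h2, n]
      · simp [h1, h2, adjSwap_other k h1 h2]
  rw [Rsw_apply hp, e]
  simp [fill3, sw2, n]

theorem fill3_self {r m p : ℕ} (h : p + 2 < m) (g : Fin m → Idx r) :
    fill3 g p (g ⟨p, by omega⟩) (g ⟨p+1, by omega⟩) (g ⟨p+2, h⟩) = g := by
  funext k
  simp only [fill3]
  split_ifs with h1 h2 h3
  all_goals first | rfl | exact congrArg g (Fin.ext (by simp [*]))

/-- The rank-two type `A` braid relation, checked for each relative order of the three labels. -/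
theorem sw2_braid {α : Type*} [LinearOrder α] (w : α → α → α → Kq) (a b c : α) :
    sw2 (fun x y => sw2 (fun y' z => sw2 (fun x' y'' => w x' y'' z) x y') y c) a b =
    sw2 (fun y z => sw2 (fun x y' => sw2 (fun y'' z' => w x y'' z') y' z) a y) b c := by
  have hq := qv_ne_zero
  rcases lt_trichotomy a b with h1 | h1 | h1 <;> rcases lt_trichotomy b c with h2 | h2 | h2 <;>
  rcases lt_trichotomy a c with h3 | h3 | h3 <;>
  first
  | (exfalso; order)
  | (try subst h1
     try subst h2
     try subst h3
     simp only [sw2, *, lt_irrefl, if_true, if_false, ne_of_lt, ne_of_gt, not_lt_of_gt]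
     try field_simp
     try ring)

theorem Rsw_braid {r m p : ℕ} (h : p + 2 < m) :
    Rsw r m p * Rsw r m (p+1) * Rsw r m p = Rsw r m (p+1) * Rsw r m p * Rsw r m (p+1) := by
  refine LinearMap.ext fun v => funext fun g => ?_
  rw [← fill3_self h g]
  simp only [Module.End.mul_apply, Rsw_fill3_left h, Rsw_fill3_right h]
  rw [sw2_braid (fun x y z => v (fill3 g p x y z))]

theorem comp_adjSwap_comp {r m p : ℕ} (g : Fin m → Idx r) :
    (g ∘ adjSwap m p) ∘ adjSwap m p = g := by
  rw [Function.comp_assoc, ← Equiv.Perm.coe_mul, adjSwap_mul_self]; rfl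

theorem Rsw_sq {r m p : ℕ} (h : p + 1 < m) :
    Rsw r m p * Rsw r m p = 1 + (qv⁻¹ - qv) • Rsw r m p := by
  have hq := qv_ne_zero
  refine LinearMap.ext fun v => funext fun g => ?_
  simp only [Module.End.mul_apply, LinearMap.add_apply, Module.End.one_apply,
    LinearMap.smul_apply, Pi.add_apply, Pi.smul_apply, smul_eq_mul, Rsw_apply h,
    comp_adjSwap_comp, Function.comp_apply, adjSwap_left h, adjSwap_right h]
  rcases lt_trichotomy (g ⟨p, by omega⟩) (g ⟨p+1, h⟩) with h1 | h1 | h1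
  · simp only [h1, h1.ne, h1.ne', h1.not_gt, if_true, if_false]; ring
  · simp only [h1, if_true]; field_simp; ring
  · simp only [h1, h1.ne, h1.ne', h1.not_gt, if_true, if_false]; ring

theorem Rsw_comm {r m p k : ℕ} (hpk : p + 1 < k) (hk : k + 1 < m) :
    Rsw r m p * Rsw r m k = Rsw r m k * Rsw r m p := by
  have hp : p + 1 < m := by omega
  have o : ∀ (j i : ℕ) (hi : i < m), i ≠ j → i ≠ j + 1 → adjSwap m j ⟨i, hi⟩ = ⟨i, hi⟩ :=
    fun j i hi h1 h2 => adjSwap_other _ h1 h2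
  refine LinearMap.ext fun v => funext fun g => ?_
  have e : (g ∘ adjSwap m p) ∘ adjSwap m k = (g ∘ adjSwap m k) ∘ adjSwap m p := by
    rw [Function.comp_assoc, Function.comp_assoc, ← Equiv.Perm.coe_mul, ← Equiv.Perm.coe_mul,
      adjSwap_comm m hpk]
  simp only [Module.End.mul_apply, Rsw_apply hp, Rsw_apply hk, Function.comp_apply]
  simp only [o p k _ (by omega) (by omega), o p (k+1) _ (by omega) (by omega),
    o k p _ (by omega) (by omega), o k (p+1) _ (by omega) (by omega), e]
  split_ifs <;> ring

theorem Fin.rev_ne_self_of_idx {r : ℕ} (a : Idx r) : Fin.rev a ≠ a := fun e => by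
  have := congrArg Fin.val e
  rw [Fin.val_rev] at this
  omega

theorem R0op_sq {r m : ℕ} (h : 0 < m) :
    R0op r m * R0op r m = 1 + (qv⁻¹ - qv) • R0op r m := by
  refine LinearMap.ext fun v => funext fun g => ?_
  simp only [Module.End.mul_apply, LinearMap.add_apply, Module.End.one_apply,
    LinearMap.smul_apply, Pi.add_apply, Pi.smul_apply, smul_eq_mul, R0op_apply h,
    Function.update_self, Fin.rev_rev, Function.update_idem, Function.update_eq_self]
  rcases lt_or_gt_of_ne (Fin.rev_ne_self_of_idx (g ⟨0, h⟩)) with h1 | h1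
  · simp only [h1, h1.not_gt, if_true, if_false]; ring
  · simp only [h1, h1.not_gt, if_true, if_false]; ring

theorem R0op_comm {r m p : ℕ} (hp : p + 1 + 1 < m) :
    R0op r m * Rsw r m (p+1) = Rsw r m (p+1) * R0op r m := by
  have h0 : 0 < m := by omega
  have o : adjSwap m (p+1) ⟨0, h0⟩ = ⟨0, h0⟩ :=
    adjSwap_other _ (by simp only; omega) (by simp only; omega)
  have e : ∀ (g : Fin m → Idx r) x, Function.update g ⟨0, h0⟩ x ∘ adjSwap m (p+1) =
      Function.update (g ∘ adjSwap m (p+1)) ⟨0, h0⟩ x := fun g x => by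
    rw [Function.update_comp_equiv, ← Equiv.Perm.inv_def, adjSwap_inv, o]
  refine LinearMap.ext fun v => funext fun g => ?_
  have n1 : (⟨p+1, by omega⟩ : Fin m) ≠ ⟨0, h0⟩ := by simp
  have n2 : (⟨p+1+1, hp⟩ : Fin m) ≠ ⟨0, h0⟩ := by simp
  simp only [Module.End.mul_apply, R0op_apply h0, Rsw_apply hp, Function.comp_apply,
    Function.update_of_ne n1, Function.update_of_ne n2, o, e]
  split_ifs <;> ring

/-- `g` with its labels in positions `0, 1` replaced by `a, b`. -/
def fill2 {r m : ℕ} (g : Fin m → Idx r) (a b : Idx r) : Fin m → Idx r :=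
  fun k => if (k : ℕ) = 0 then a else if (k : ℕ) = 1 then b else g k

/-- The formula for `Ψ(H_0)` on a function of the label in position `0`. -/
def rv1 {r : ℕ} (w : Idx r → Kq) (a : Idx r) : Kq :=
  w (Fin.rev a) + (if a < Fin.rev a then (qv⁻¹ - qv) * w a else 0)

theorem Rsw_fill2 {r m : ℕ} (h : 1 < m) (v : TP r m) (g : Fin m → Idx r) (a b : Idx r) :
    Rsw r m 0 v (fill2 g a b) = sw2 (fun x y => v (fill2 g x y)) a b := by
  have hp : 0 + 1 < m := by omega
  have e : fill2 g a b ∘ adjSwap m 0 = fill2 g b a := by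
    funext k
    simp only [Function.comp_apply, fill2, adjSwap_val hp]
    by_cases h1 : (k : ℕ) = 0
    · simp [h1]
    · by_cases h2 : (k : ℕ) = 1
      · simp [h2]
      · simp [h1, h2, adjSwap_other k h1 h2]
  rw [Rsw_apply hp, e]
  simp [fill2, sw2]

theorem R0op_fill2 {r m : ℕ} (h : 1 < m) (v : TP r m) (g : Fin m → Idx r) (a b : Idx r) :
    R0op r m v (fill2 g a b) = rv1 (fun x => v (fill2 g x b)) a := by
  have hp : 0 < m := by omega
  have e : Function.update (fill2 g a b) ⟨0, hp⟩ (Fin.rev a) = fill2 g (Fin.rev a) b := by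
    funext k
    by_cases h1 : (k : ℕ) = 0
    · have : k = ⟨0, hp⟩ := Fin.ext h1
      simp [this, fill2]
    · rw [Function.update_of_ne (fun e => h1 (congrArg Fin.val e))]
      simp [fill2, h1]
  have e0 : fill2 g a b ⟨0, hp⟩ = a := by simp [fill2]
  rw [R0op_apply hp, e0, e]
  rfl

theorem fill2_self {r m : ℕ} (h : 1 < m) (g : Fin m → Idx r) :
    fill2 g (g ⟨0, by omega⟩) (g ⟨1, h⟩) = g := by
  funext k
  simp only [fill2]
  split_ifs with h1 h2
  all_goals first | rfl | exact congrArg g (Fin.ext (by simp [*]))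

/-- The rank-two type `B` braid relation, checked on each chamber and wall of the plane of the
two labels. -/
theorem rv1_sw2_braid {r : ℕ} (w : Idx r → Idx r → Kq) (a b : Idx r) :
    rv1 (fun x => sw2 (fun x y => rv1 (fun x => sw2 (fun x y => w x y) x y) x) x b) a =
    sw2 (fun x y => rv1 (fun x => sw2 (fun x y => rv1 (fun x => w x y) x) x y) x) a b := by
  have hq := qv_ne_zero
  have na := Fin.rev_ne_self_of_idx a
  have nb := Fin.rev_ne_self_of_idx b
  have la := a.2
  have lb := b.2
  rcases lt_or_gt_of_ne na with h1 | h1 <;> rcases lt_or_gt_of_ne nb with h2 | h2 <;>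
  rcases lt_trichotomy a b with h3 | h3 | h3 <;>
  rcases lt_trichotomy a (Fin.rev b) with h4 | h4 | h4 <;>
  first
  | (exfalso
     simp only [Fin.lt_def, Fin.ext_iff, Fin.val_rev] at h1 h2 h3 h4
     omega)
  -- In a possible chamber the ordering decides every conditional, leaving an identity in `ℚ(q)`.
  | (first | subst h3 | subst h4 | skip
     simp only [Fin.lt_def, Fin.val_rev] at h1 h2
     try simp only [Fin.lt_def, Fin.val_rev] at h3
     try simp only [Fin.lt_def, Fin.val_rev] at h4
     simp (disch := first | exact trivial |
        (simp only [Fin.lt_def, Fin.ext_iff, Fin.val_rev]; omega)) only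
       [rv1, sw2, Fin.rev_rev, if_pos, if_neg]
     try field_simp
     try ring)

theorem R0op_Rsw_braid {r m : ℕ} (h : 1 < m) :
    R0op r m * Rsw r m 0 * R0op r m * Rsw r m 0 =
      Rsw r m 0 * R0op r m * Rsw r m 0 * R0op r m := by
  refine LinearMap.ext fun v => funext fun g => ?_
  rw [← fill2_self h g]
  simp only [Module.End.mul_apply, Rsw_fill2 h, R0op_fill2 h]
  exact rv1_sw2_braid (fun x y => v (fill2 g x y)) _ _

/-! ### The projections onto `V^{⊗l} ⊗ η_{r+3/2}^{⊗(m-l)}` -/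

open Classical in
/-- The projection of `V̄^⊗m` onto `V^{⊗l} ⊗ η_{r+3/2}^{⊗(m-l)}` killing the other `M_f`. -/
def projL (r m l : ℕ) : Module.End Kq (TP r m) where
  toFun v := fun g => if goodF r m l g then v g else 0
  map_add' u v := by
    funext g
    simp only [Pi.add_apply]
    split_ifs <;> simp
  map_smul' s v := by
    funext g
    simp only [Pi.smul_apply, smul_eq_mul, RingHom.id_apply]
    split_ifs <;> simp

open Classical in
theorem projL_apply {r m l : ℕ} (v : TP r m) (g : Fin m → Idx r) :
    projL r m l v g = if goodF r m l g then v g else 0 := rfl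

theorem projL_Mf_of_good {r m l : ℕ} {f : Fin m → Idx r} (hf : goodF r m l f) :
    projL r m l (Mf f) = Mf f := by
  funext g
  by_cases h : g = f
  · subst h; simp [projL_apply, hf]
  · simp [projL_apply, Mf, Pi.single_eq_of_ne h]

theorem projL_Mf_of_not_good {r m l : ℕ} {f : Fin m → Idx r} (hf : ¬ goodF r m l f) :
    projL r m l (Mf f) = 0 := by
  funext g
  by_cases h : g = f
  · subst h; simp [projL_apply, hf]
  · simp [projL_apply, Mf, Pi.single_eq_of_ne h]

theorem projL_of_mem {r m l : ℕ} {v : TP r m} (hv : v ∈ Vsub r m l) : projL r m l v = v := by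
  refine Submodule.span_induction ?_ (map_zero _) ?_ ?_ hv
  · rintro _ ⟨f, hf, rfl⟩
    exact projL_Mf_of_good hf
  · intro x y _ _ hx hy
    rw [map_add, hx, hy]
  · intro a x _ hx
    rw [map_smul, hx]

theorem projL_mul_self (r m l : ℕ) : projL r m l * projL r m l = projL r m l := by
  refine LinearMap.ext fun v => funext fun g => ?_
  simp only [Module.End.mul_apply, projL_apply]
  split_ifs <;> rfl

theorem not_goodF_of_goodF {r m l k : ℕ} (hl : l ≤ m) (hk : k ≤ m) (h : l ≠ k)
    {g : Fin m → Idx r} (hg : goodF r m l g) : ¬ goodF r m k g := by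
  intro hg'
  rcases lt_or_gt_of_ne h with h | h
  · have hm : l < m := by omega
    exact ((hg' ⟨l, hm⟩).1 h).2 ((hg ⟨l, hm⟩).2 le_rfl)
  · have hm : k < m := by omega
    exact ((hg ⟨k, hm⟩).1 h).2 ((hg' ⟨k, hm⟩).2 le_rfl)

theorem projL_mul_projL {r m l k : ℕ} (hl : l ≤ m) (hk : k ≤ m) (h : l ≠ k) :
    projL r m l * projL r m k = 0 := by
  refine LinearMap.ext fun v => funext fun g => ?_
  simp only [Module.End.mul_apply, projL_apply, LinearMap.zero_apply, Pi.zero_apply]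
  split_ifs with h1 h2
  · exact absurd h2 (not_goodF_of_goodF hl hk h h1)
  all_goals rfl

theorem goodF_comp_adjSwap {r m l p : ℕ} (hp : p + 1 < m) (hl : p + 1 ≠ l)
    (g : Fin m → Idx r) : goodF r m l (g ∘ adjSwap m p) ↔ goodF r m l g := by
  have key : ∀ g : Fin m → Idx r, goodF r m l g → goodF r m l (g ∘ adjSwap m p) := by
    intro g hg k
    have := hg (adjSwap m p k)
    rw [adjSwap_val hp] at this
    refine ⟨fun h => this.1 ?_, fun h => this.2 ?_⟩ <;> split_ifs <;> omega
  refine ⟨fun h => ?_, key g⟩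
  have := key _ h
  rwa [comp_adjSwap_comp] at this

/-- `Ψ(H_{p+1})` commutes with the projection unless it mixes the positions `l` and `l+1`. -/
theorem Rsw_comm_projL {r m l p : ℕ} (hp : p + 1 < m) (hl : p + 1 ≠ l) :
    Rsw r m p * projL r m l = projL r m l * Rsw r m p := by
  refine LinearMap.ext fun v => funext fun g => ?_
  have e := goodF_comp_adjSwap hp hl g
  by_cases hg : goodF r m l g
  · have hg' := e.2 hg
    simp only [Module.End.mul_apply, projL_apply, Rsw_apply hp, if_pos hg, if_pos hg']
  · have hg' := mt e.1 hg
    simp only [Module.End.mul_apply, projL_apply, Rsw_apply hp, if_neg hg, if_neg hg']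
    simp

theorem Rsw_mul_projL {r m l p : ℕ} (hp : p + 1 < m) (hl : l ≤ p) :
    Rsw r m p * projL r m l = qv⁻¹ • projL r m l := by
  rw [Rsw_comm_projL hp (by omega)]
  refine LinearMap.ext fun v => funext fun g => ?_
  simp only [Module.End.mul_apply, projL_apply, Rsw_apply hp, LinearMap.smul_apply,
    Pi.smul_apply, smul_eq_mul]
  split_ifs with h1 h2
  · rfl
  · exact absurd (((h1 _).2 hl).trans ((h1 _).2 (hl.trans (Nat.le_succ p))).symm) h2
  · exact absurd (((h1 _).2 hl).trans ((h1 _).2 (hl.trans (Nat.le_succ p))).symm) h2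
  · simp

/-! ### The anti-homomorphism -/

/-- `Ψ(H_i)` as an element of the opposite algebra, in which the action reads as a
homomorphism. -/
def tOp (r m i : ℕ) : (Module.End Kq (TP r m))ᵐᵒᵖ := MulOpposite.op (RopN r m i)

/-- The opposite of `projL`. -/
def eOp (r m l : ℕ) : (Module.End Kq (TP r m))ᵐᵒᵖ := MulOpposite.op (projL r m l)

/-- The product of the `Ψ(H_i)` along a reduced word of `σ`, in the opposite algebra. -/
def sOp (r m : ℕ) {l : ℕ} (σ : Equiv.Perm (Fin l)) : (Module.End Kq (TP r m))ᵐᵒᵖ :=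
  wordProd (fun p => tOp r m (p+1)) σ

theorem op_opPerm (r m : ℕ) {l : ℕ} (σ : Equiv.Perm (Fin l)) :
    MulOpposite.op (opPerm r m σ) = sOp r m σ := by
  simp only [opPerm, sOp, wordProd, MulOpposite.op_list_prod, List.map_reverse,
    List.reverse_reverse, List.map_map]
  rfl

theorem RopN_succ (r m p : ℕ) : RopN r m (p+1) = Rsw r m p := by simp [RopN]

theorem RopN_zero (r m : ℕ) : RopN r m 0 = R0op r m := by simp [RopN]

theorem tOp_sq {r m i : ℕ} (hi : i < m) :
    tOp r m i * tOp r m i = 1 + algebraMap Kq _ (qv⁻¹ - qv) * tOp r m i := by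
  apply MulOpposite.unop_injective
  rw [← Algebra.smul_def]
  cases i with
  | zero => simpa [tOp, RopN_zero] using R0op_sq hi
  | succ p => simpa [tOp, RopN_succ] using Rsw_sq hi

theorem tOp_quad {r m i : ℕ} (hi : i < m) :
    (tOp r m i + algebraMap Kq _ qv) * (tOp r m i - algebraMap Kq _ qv⁻¹) = 0 := by
  have h := tOp_sq (r := r) hi
  have c : tOp r m i * algebraMap Kq _ qv⁻¹ = algebraMap Kq _ qv⁻¹ * tOp r m i :=
    (Algebra.commutes _ _).symm
  have u : algebraMap Kq (Module.End Kq (TP r m))ᵐᵒᵖ qv * algebraMap Kq _ qv⁻¹ = 1 := by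
    rw [← map_mul, mul_inv_cancel₀ qv_ne_zero, map_one]
  rw [map_sub, sub_mul] at h
  rw [mul_sub, add_mul, add_mul, h, c, u]
  abel

theorem tOp_comm {r m i j : ℕ} (hj : j < m) (hij : i + 1 < j) :
    tOp r m i * tOp r m j = tOp r m j * tOp r m i := by
  apply MulOpposite.unop_injective
  obtain ⟨k, rfl⟩ : ∃ k, j = k + 1 := ⟨j - 1, by omega⟩
  cases i with
  | zero =>
    obtain ⟨k, rfl⟩ : ∃ n, k = n + 1 := ⟨k - 1, by omega⟩
    simpa [tOp, RopN_succ, RopN_zero] using (R0op_comm hj).symm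
  | succ p => simpa [tOp, RopN_succ] using (Rsw_comm (by omega) hj).symm

theorem tOp_braid {r m i : ℕ} (hi : 1 ≤ i) (h : i + 1 < m) :
    tOp r m i * tOp r m (i+1) * tOp r m i = tOp r m (i+1) * tOp r m i * tOp r m (i+1) := by
  apply MulOpposite.unop_injective
  obtain ⟨k, rfl⟩ : ∃ k, i = k + 1 := ⟨i - 1, by omega⟩
  simp only [tOp, RopN_succ, MulOpposite.unop_mul, MulOpposite.unop_op]
  exact Rsw_braid h

theorem tOp_braid0 {r m : ℕ} (h : 1 < m) :
    tOp r m 0 * tOp r m 1 * tOp r m 0 * tOp r m 1 =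
      tOp r m 1 * tOp r m 0 * tOp r m 1 * tOp r m 0 := by
  apply MulOpposite.unop_injective
  simp only [tOp, RopN_succ r m 0, RopN_zero, MulOpposite.unop_mul, MulOpposite.unop_op]
  exact (R0op_Rsw_braid h).symm

theorem braidRel_tOp {r m l : ℕ} (hl : l ≤ m) : BraidRel l (fun p => tOp r m (p+1)) where
  comm _ _ h1 h2 := tOp_comm (by omega) (by omega)
  braid _ h := tOp_braid (by omega) (by omega)

theorem eOp_mul_self (r m l : ℕ) : eOp r m l * eOp r m l = eOp r m l := by
  rw [eOp, ← MulOpposite.op_mul, projL_mul_self]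

theorem eOp_mul_eOp {r m l k : ℕ} (hl : l ≤ m) (hk : k ≤ m) (h : l ≠ k) :
    eOp r m l * eOp r m k = 0 := by
  rw [eOp, eOp, ← MulOpposite.op_mul, projL_mul_projL hk hl h.symm, MulOpposite.op_zero]

theorem commute_eOp_tOp {r m l i : ℕ} (h0 : 0 < i) (hi : i < m) (hl : i ≠ l) :
    Commute (eOp r m l) (tOp r m i) := by
  obtain ⟨k, rfl⟩ : ∃ k, i = k + 1 := ⟨i - 1, by omega⟩
  rw [Commute, SemiconjBy, eOp, tOp, ← MulOpposite.op_mul, ← MulOpposite.op_mul, RopN_succ,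
    Rsw_comm_projL hi hl]

theorem eOp_mul_tOp {r m l i : ℕ} (hi : i < m) (hl : l < i) :
    eOp r m l * tOp r m i = algebraMap Kq _ qv⁻¹ * eOp r m l := by
  obtain ⟨k, rfl⟩ : ∃ k, i = k + 1 := ⟨i - 1, by omega⟩
  rw [eOp, tOp, ← MulOpposite.op_mul, RopN_succ, Rsw_mul_projL hi (by omega),
    ← Algebra.smul_def, MulOpposite.op_smul]

theorem commute_eOp_sOp {r m l : ℕ} (hl : l ≤ m) (σ : Equiv.Perm (Fin l)) :
    Commute (eOp r m l) (sOp r m σ) := by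
  refine Commute.list_prod_right _ _ fun x hx => ?_
  obtain ⟨p, hp, rfl⟩ := List.mem_map.1 hx
  have := lt_of_mem_permWord σ p hp
  exact commute_eOp_tOp (by omega) (by omega) (by omega)

theorem sOp_mul_adjSwap {r m l p : ℕ} (hl : l ≤ m) {σ : Equiv.Perm (Fin l)} (hp : p + 1 < l)
    (hlen : lenPerm (σ * adjSwap l p) = lenPerm σ + 1) :
    sOp r m (σ * adjSwap l p) = sOp r m σ * tOp r m (p+1) :=
  wordProd_mul_up (braidRel_tOp hl) hp hlen

theorem sOp_mul_tOp_down {r m l p : ℕ} (hl : l ≤ m) {σ : Equiv.Perm (Fin l)} (hp : p + 1 < l)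
    (hlen : lenPerm (σ * adjSwap l p) + 1 = lenPerm σ) :
    sOp r m σ * tOp r m (p+1) =
      sOp r m (σ * adjSwap l p) + algebraMap Kq _ (qv⁻¹ - qv) * sOp r m σ := by
  have h := sOp_mul_adjSwap (r := r) hl (σ := σ * adjSwap l p) hp
    (by rw [mul_adjSwap_cancel]; omega)
  rw [mul_adjSwap_cancel] at h
  rw [h, mul_assoc, tOp_sq (by omega), mul_add, mul_one, ← mul_assoc, ← mul_assoc,
    Algebra.commutes (qv⁻¹ - qv) (sOp r m (σ * adjSwap l p))]

theorem sOp_adjSwap_mul {r m l p : ℕ} (hl : l ≤ m) {σ : Equiv.Perm (Fin l)} (hp : p + 1 < l)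
    (hlen : lenPerm (adjSwap l p * σ) = lenPerm σ + 1) :
    sOp r m (adjSwap l p * σ) = tOp r m (p+1) * sOp r m σ :=
  wordProd_up_mul (braidRel_tOp hl) hp hlen

theorem tOp_mul_sOp_down {r m l p : ℕ} (hl : l ≤ m) {σ : Equiv.Perm (Fin l)} (hp : p + 1 < l)
    (hlen : lenPerm (adjSwap l p * σ) + 1 = lenPerm σ) :
    tOp r m (p+1) * sOp r m σ =
      sOp r m (adjSwap l p * σ) + algebraMap Kq _ (qv⁻¹ - qv) * sOp r m σ := by
  have c : adjSwap l p * (adjSwap l p * σ) = σ := by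
    rw [← mul_assoc, adjSwap_mul_self, one_mul]
  have h := sOp_adjSwap_mul (r := r) hl (σ := adjSwap l p * σ) hp (by rw [c]; omega)
  rw [c] at h
  rw [h, ← mul_assoc, tOp_sq (by omega), add_mul, one_mul, mul_assoc]

theorem sOp_adjSwap {r m l p : ℕ} (hl : l ≤ m) (hp : p + 1 < l) :
    sOp r m (adjSwap l p) = tOp r m (p+1) :=
  wordProd_adjSwap (braidRel_tOp hl) hp

/-- The image of `x_σ^{(l)}`: project, then act by `H_σ`. -/
def xOp (r m : ℕ) {l : ℕ} (σ : Equiv.Perm (Fin l)) : (Module.End Kq (TP r m))ᵐᵒᵖ :=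
  eOp r m l * sOp r m σ

theorem xOp_mul_xOp {r m l : ℕ} (hl : l ≤ m) (σ γ : Equiv.Perm (Fin l)) :
    xOp r m σ * xOp r m γ = eOp r m l * (sOp r m σ * sOp r m γ) := by
  rw [xOp, xOp, mul_assoc, ← mul_assoc (sOp r m σ), ← (commute_eOp_sOp hl σ).eq, ← mul_assoc,
    ← mul_assoc, eOp_mul_self, mul_assoc]

/-- The images of the generators of `𝓗_m` in the opposite algebra. -/
def genMap (r m : ℕ) : DGen m → (Module.End Kq (TP r m))ᵐᵒᵖ
  | Sum.inl i => tOp r m (i : ℕ)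
  | Sum.inr ⟨_, σ⟩ => xOp r m σ

theorem lift_Tvar (r m : ℕ) (i : Fin m) :
    FreeAlgebra.lift Kq (genMap r m) (Tvar m i) = tOp r m (i : ℕ) :=
  FreeAlgebra.lift_ι_apply _ _

theorem lift_Xvar (r m : ℕ) (l : Fin (m+1)) (σ : Equiv.Perm (Fin (l : ℕ))) :
    FreeAlgebra.lift Kq (genMap r m) (Xvar m l σ) = xOp r m σ :=
  FreeAlgebra.lift_ι_apply _ _

/-- The defining relations of `𝓗_m` hold for the proposed images of its generators. -/
theorem genMap_rel (r m : ℕ) ⦃a b : FreeAlgebra Kq (DGen m)⦄ (h : DHrel m a b) :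
    FreeAlgebra.lift Kq (genMap r m) a = FreeAlgebra.lift Kq (genMap r m) b := by
  have le : ∀ l : Fin (m+1), (l : ℕ) ≤ m := fun l => Nat.lt_succ_iff.1 l.2
  have al : ∀ (c : Kq) (x y : (Module.End Kq (TP r m))ᵐᵒᵖ),
      x * (algebraMap Kq _ c * y) = algebraMap Kq _ c * (x * y) := fun c x y => by
    rw [← mul_assoc, ← Algebra.commutes, mul_assoc]
  cases h with
  | quadT i => simpa only [map_mul, map_add, map_sub, AlgHom.commutes, lift_Tvar, map_zero]
      using tOp_quad i.2
  | braidT i h1 h2 => simpa only [map_mul, lift_Tvar] using tOp_braid h1 h2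
  | commT i j h =>
    simp only [map_mul, lift_Tvar]
    rcases h with h | h
    · exact tOp_comm j.2 h
    · exact (tOp_comm i.2 h).symm
  | braid0T h => simpa only [map_mul, lift_Tvar] using tOp_braid0 h
  | xRightUp l σ p hp hlen =>
    simp only [map_mul, lift_Xvar]
    rw [xOp_mul_xOp (le l), sOp_adjSwap (le l) hp, ← sOp_mul_adjSwap (le l) hp hlen, xOp]
  | xRightDown l σ p hp hlen =>
    simp only [map_mul, map_add, AlgHom.commutes, lift_Xvar]
    rw [xOp_mul_xOp (le l), sOp_adjSwap (le l) hp, sOp_mul_tOp_down (le l) hp hlen, mul_add, al,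
      xOp, xOp]
  | xLeftUp l σ p hp hlen =>
    simp only [map_mul, lift_Xvar]
    rw [xOp_mul_xOp (le l), sOp_adjSwap (le l) hp, ← sOp_adjSwap_mul (le l) hp hlen, xOp]
  | xLeftDown l σ p hp hlen =>
    simp only [map_mul, map_add, AlgHom.commutes, lift_Xvar]
    rw [xOp_mul_xOp (le l), sOp_adjSwap (le l) hp, tOp_mul_sOp_down (le l) hp hlen, mul_add, al,
      xOp, xOp]
  | xOrtho l k h σ γ =>
    simp only [map_mul, map_zero, lift_Xvar]
    rw [xOp, (commute_eOp_sOp (le l) σ).eq, xOp, mul_assoc, ← mul_assoc (eOp r m l),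
      eOp_mul_eOp (le l) (le k) (fun e => h (Fin.ext e)), zero_mul, mul_zero]
  | TxMid i l h0 hil σ =>
    have hm := le l
    obtain ⟨p, rfl⟩ : ∃ p, i = p + 1 := ⟨i - 1, by omega⟩
    simp only [map_mul, lift_Xvar, lift_Tvar, Nat.add_sub_cancel]
    rw [xOp_mul_xOp (le l), sOp_adjSwap (le l) hil, xOp, ← mul_assoc, ← mul_assoc,
      (commute_eOp_tOp (by omega) (by omega) (by omega)).eq]
  | xTMid i l h0 hil σ =>
    have hm := le l
    obtain ⟨p, rfl⟩ : ∃ p, i = p + 1 := ⟨i - 1, by omega⟩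
    simp only [map_mul, lift_Xvar, lift_Tvar, Nat.add_sub_cancel]
    rw [xOp_mul_xOp (le l), sOp_adjSwap (le l) hil, xOp, mul_assoc]
  | TxBig i l h σ =>
    simp only [map_mul, AlgHom.commutes, lift_Xvar, lift_Tvar]
    rw [xOp, ← mul_assoc, ← (commute_eOp_tOp (by omega) i.2 (by omega)).eq,
      eOp_mul_tOp i.2 h, mul_assoc]
  | xTBig i l h σ =>
    simp only [map_mul, AlgHom.commutes, lift_Xvar, lift_Tvar]
    rw [xOp, (commute_eOp_sOp (le l) σ).eq, mul_assoc, eOp_mul_tOp i.2 h, al]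

/-- The anti-homomorphism `Ξ`. -/
def xiHom (r m : ℕ) : DuplexH m →ₐ[Kq] (Module.End Kq (TP r m))ᵐᵒᵖ :=
  RingQuot.liftAlgHom Kq ⟨FreeAlgebra.lift Kq (genMap r m), genMap_rel r m⟩

theorem xiHom_Tg (r m : ℕ) (i : Fin m) : xiHom r m (Tg m i) = tOp r m (i : ℕ) := by
  rw [xiHom, Tg, RingQuot.liftAlgHom_mkAlgHom_apply, lift_Tvar]

theorem xiHom_Xg (r m : ℕ) (l : Fin (m+1)) (σ : Equiv.Perm (Fin (l : ℕ))) :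
    xiHom r m (Xg m l σ) = xOp r m σ := by
  rw [xiHom, Xg, RingQuot.liftAlgHom_mkAlgHom_apply, lift_Xvar]

theorem unop_xOp (r m : ℕ) {l : ℕ} (σ : Equiv.Perm (Fin l)) :
    (xOp r m σ).unop = opPerm r m σ * projL r m l := by
  rw [xOp, ← op_opPerm, eOp, ← MulOpposite.op_mul, MulOpposite.unop_op]

/-- Conditions (ii) and (iii) prescribe an operator on every `M_f`. -/
theorem eq_of_good_of_not_good {r m l : ℕ} {A B C : Module.End Kq (TP r m)}
    (hA : ∀ v ∈ Vsub r m l, A v = C v) (hA' : ∀ f, ¬ goodF r m l f → A (Mf f) = 0)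
    (hB : ∀ v ∈ Vsub r m l, B v = C v) (hB' : ∀ f, ¬ goodF r m l f → B (Mf f) = 0) :
    A = B := by
  refine LinearMap.pi_ext' fun f => LinearMap.ext_ring ?_
  change A (Mf f) = B (Mf f)
  by_cases hf : goodF r m l f
  · have : (Mf f : TP r m) ∈ Vsub r m l := Submodule.subset_span ⟨f, hf, rfl⟩
    rw [hA _ this, hB _ this]
  · rw [hA' f hf, hB' f hf]

/-- **Proposition 2.3.** There exists a unique `K`-algebra anti-homomorphism
`Ξ : 𝓗_m → End_K(V̄^⊗m)` (realized as an algebra homomorphism into the opposite algebra)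
such that (i) `Ξ(T_i) = Ψ(H_i)` for all `i`; (ii) for every `0 ≤ l ≤ m` and `σ ∈ 𝔖_l`,
the restriction of `Ξ(x_σ^{(l)})` to `V^{⊗l} ⊗ η_{r+3/2}^{⊗(m-l)}` equals
`Ψ_l^V(H_σ) ⊗ id^{⊗(m-l)}`; and (iii) `Ξ(x_σ^{(l)}) M_f = 0` for every basis vector
`M_f ∉ V^{⊗l} ⊗ η_{r+3/2}^{⊗(m-l)}`. -/
theorem duplex_action_exists_unique (r m : ℕ) (hr : 1 ≤ r) (hm : 2 ≤ m) :
    ∃! Xi : DuplexH m →ₐ[Kq] (Module.End Kq (TP r m))ᵐᵒᵖ,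
      (∀ i : Fin m, (Xi (Tg m i)).unop = RopN r m (i : ℕ)) ∧
      (∀ (l : Fin (m+1)) (σ : Equiv.Perm (Fin (l : ℕ))),
        ∀ v ∈ Vsub r m (l : ℕ), (Xi (Xg m l σ)).unop v = opPerm r m σ v) ∧
      (∀ (l : Fin (m+1)) (σ : Equiv.Perm (Fin (l : ℕ))) (f : Fin m → Idx r),
        ¬ goodF r m (l : ℕ) f → (Xi (Xg m l σ)).unop (Mf f) = 0) := by
  have P1 : ∀ i : Fin m, (xiHom r m (Tg m i)).unop = RopN r m (i : ℕ) := fun i => by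
    rw [xiHom_Tg]; rfl
  have P2 : ∀ (l : Fin (m+1)) (σ : Equiv.Perm (Fin (l : ℕ))),
      ∀ v ∈ Vsub r m (l : ℕ), (xiHom r m (Xg m l σ)).unop v = opPerm r m σ v := by
    intro l σ v hv
    rw [xiHom_Xg, unop_xOp, Module.End.mul_apply, projL_of_mem hv]
  have P3 : ∀ (l : Fin (m+1)) (σ : Equiv.Perm (Fin (l : ℕ))) (f : Fin m → Idx r),
      ¬ goodF r m (l : ℕ) f → (xiHom r m (Xg m l σ)).unop (Mf f) = 0 := by
    intro l σ f hf
    rw [xiHom_Xg, unop_xOp, Module.End.mul_apply, projL_Mf_of_not_good hf, map_zero]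
  refine ⟨xiHom r m, ⟨P1, P2, P3⟩, ?_⟩
  rintro Xi ⟨h1, h2, h3⟩
  refine RingQuot.ringQuot_ext' _ _ _ (FreeAlgebra.hom_ext (funext fun x => ?_))
  apply MulOpposite.unop_injective
  rcases x with i | ⟨l, σ⟩
  · exact (h1 i).trans (P1 i).symm
  · exact eq_of_good_of_not_good (h2 l σ) (h3 l σ) (P2 l σ) (P3 l σ)
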